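/- arXiv:2007.00123 — 2 statements merged into one kernel-verified Lean document; each statement's English description precedes it below -/
import Mathlib

section
/- Let d be a proper divisor of m with d even, ν₂(d) ∈ {1, ν₂(m) − 1, ν₂(m)}, and gcd(d, m/d) dividing 2. Then the number of integers n with 1 ≤ n ≤ m such that m divides n² − 1 and gcd(n−1, m) = d equals 1 if ν₂(d) = ν₂(m) or (ν₂(m) = ν₂(d) + 1 and ν₂(d) ≥ 1), and equals 2 if ν₂(d) = 1 and ν₂(m) ≥ 3. -/
lemma redei_lin (a b k : ℕ) (hk : 0 < k) (h : Nat.Coprime a k) :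
    ∃ c < k, ∀ t, k ∣ a * t + b ↔ t ≡ c [MOD k] := by
  haveI : NeZero k := ⟨hk.ne'⟩
  have hu : IsUnit (a : ZMod k) := (ZMod.isUnit_iff_coprime a k).2 h
  obtain ⟨u, hu⟩ := hu
  refine ⟨(-(↑u⁻¹ : ZMod k) * b).val, ZMod.val_lt _, fun t => ?_⟩
  rw [← ZMod.natCast_eq_natCast_iff, ZMod.natCast_zmod_val, ← ZMod.natCast_eq_zero_iff]
  push_cast
  rw [← hu]
  have h1 : (u : ZMod k) * (↑u⁻¹ : ZMod k) = 1 := u.mul_inv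
  constructor
  · intro h
    linear_combination (↑u⁻¹ : ZMod k) * h - (t : ZMod k) * h1
  · intro h
    rw [h]
    linear_combination -(b : ZMod k) * h1

lemma redei_card (d k : ℕ) (hd : 0 < d) (hk : 0 < k) :
    ((Finset.Icc 1 (d * k)).filter
        (fun n => d * k ∣ n ^ 2 - 1 ∧ Nat.gcd (n - 1) (d * k) = d)).card =
    ((Finset.range k).filter (fun t => Nat.Coprime t k ∧ k ∣ d * t + 2)).card := by
  symm
  have key : ∀ t, (d * k ∣ (d * t + 1) ^ 2 - 1 ∧ Nat.gcd (d * t + 1 - 1) (d * k) = d) ↔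
      (Nat.Coprime t k ∧ k ∣ d * t + 2) := by
    intro t
    have e1 : (d * t + 1) ^ 2 - 1 = d * (t * (d * t + 2)) := by
      rw [Nat.sub_eq_iff_eq_add (Nat.one_le_pow _ _ (by omega))]; ring
    rw [e1, Nat.add_sub_cancel, Nat.gcd_mul_left, Nat.mul_dvd_mul_iff_left hd]
    have e2 : d * Nat.gcd t k = d ↔ Nat.Coprime t k := by
      rw [Nat.Coprime]
      constructor
      · intro h; exact Nat.eq_of_mul_eq_mul_left hd (by rw [h, mul_one])
      · intro h; rw [h, mul_one]
    rw [e2]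
    constructor
    · rintro ⟨h1, h2⟩; exact ⟨h2, (Nat.Coprime.symm h2).dvd_of_dvd_mul_left h1⟩
    · rintro ⟨h1, h2⟩; exact ⟨h2.mul_left _, h1⟩
  apply Finset.card_bij (fun t _ => d * t + 1)
  · intro t ht
    rw [Finset.mem_filter, Finset.mem_range] at ht
    rw [Finset.mem_filter, Finset.mem_Icc]
    refine ⟨⟨by omega, ?_⟩, (key t).2 ht.2⟩
    have : d * (t + 1) ≤ d * k := Nat.mul_le_mul_left d ht.1
    rw [mul_add] at this
    omega
  · intro a _ b _ h
    have h : d * a = d * b := by simpa using h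
    exact Nat.eq_of_mul_eq_mul_left hd h
  · intro n hn
    rw [Finset.mem_filter, Finset.mem_Icc] at hn
    obtain ⟨⟨h1, h2⟩, h3, h4⟩ := hn
    have : d ∣ n - 1 := by
      conv_lhs => rw [← h4]
      exact Nat.gcd_dvd_left _ _
    obtain ⟨t, ht⟩ := this
    obtain rfl : n = d * t + 1 := by omega
    refine ⟨t, ?_, rfl⟩
    rw [Finset.mem_filter, Finset.mem_range]
    refine ⟨?_, (key t).1 ⟨h3, h4⟩⟩
    exact Nat.lt_of_mul_lt_mul_left (a := d) (by omega)

lemma redei_one (k c : ℕ) (hk : 0 < k) (P : ℕ → Prop) [DecidablePred P]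
    (h : ∀ t, P t ↔ t ≡ c [MOD k]) : ((Finset.range k).filter P).card = 1 := by
  rw [Finset.card_eq_one]
  refine ⟨c % k, ?_⟩
  ext t
  rw [Finset.mem_filter, Finset.mem_range, Finset.mem_singleton, h]
  constructor
  · rintro ⟨h1, h2⟩
    rw [← Nat.mod_eq_of_lt h1]; exact h2
  · rintro rfl
    exact ⟨Nat.mod_lt _ hk, Nat.mod_modEq _ _⟩

lemma redei_two (k c : ℕ) (hc : c < k) (P : ℕ → Prop) [DecidablePred P]
    (h : ∀ t, P t ↔ t ≡ c [MOD k]) : ((Finset.range (2 * k)).filter P).card = 2 := by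
  rw [Finset.card_eq_two]
  refine ⟨c, c + k, by omega, ?_⟩
  ext t
  rw [Finset.mem_filter, Finset.mem_range, Finset.mem_insert, Finset.mem_singleton, h]
  constructor
  · rintro ⟨h1, h2⟩
    rw [Nat.ModEq, Nat.mod_eq_of_lt hc] at h2
    rcases lt_or_ge t k with h3 | h3
    · rw [Nat.mod_eq_of_lt h3] at h2; exact Or.inl h2
    · rw [Nat.mod_eq_sub_mod h3, Nat.mod_eq_of_lt (by omega)] at h2
      right; omega
  · rintro (rfl | rfl)
    · exact ⟨by omega, rfl⟩
    · exact ⟨by omega, by simp [Nat.ModEq]⟩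

/-- Proposition 3.3: the number of Rédei involutions with d + χ + 1 fixed
points for a fixed parameter a. -/
theorem stmt_9 (q : ℕ) (hq : ∃ p' j : ℕ, p'.Prime ∧ Odd p' ∧ 0 < j ∧ q = p' ^ j)
    (χ : ℤ) (hχ : χ = 1 ∨ χ = -1) (m : ℕ) (hm : (m : ℤ) = (q : ℤ) - χ)
    (d : ℕ) (hdm : d ∣ m) (hdne : d ≠ m) (hdeven : Even d)
    (hval : padicValNat 2 d = 1 ∨ padicValNat 2 d = padicValNat 2 m - 1 ∨
      padicValNat 2 d = padicValNat 2 m)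
    (hgcd : Nat.gcd d (m / d) ∣ 2) :
    ((padicValNat 2 d = padicValNat 2 m ∨
        (padicValNat 2 m = padicValNat 2 d + 1 ∧ 1 ≤ padicValNat 2 d)) →
      ((Finset.Icc 1 m).filter
        (fun n => m ∣ n ^ 2 - 1 ∧ Nat.gcd (n - 1) m = d)).card = 1) ∧
    ((padicValNat 2 d = 1 ∧ 3 ≤ padicValNat 2 m) →
      ((Finset.Icc 1 m).filter
        (fun n => m ∣ n ^ 2 - 1 ∧ Nat.gcd (n - 1) m = d)).card = 2) := by
  have hm0 : 0 < m := by
    obtain ⟨p, j, hp, ho, hj, rfl⟩ := hq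
    have h2 : 1 < p ^ j := Nat.one_lt_pow hj.ne' hp.one_lt
    have h3 : (1 : ℤ) < ((p ^ j : ℕ) : ℤ) := by exact_mod_cast h2
    omega
  clear hq hm hval
  obtain ⟨k, rfl⟩ := hdm
  have hd : 0 < d := Nat.pos_of_mul_pos_right hm0
  have hk : 0 < k := Nat.pos_of_mul_pos_left hm0
  rw [Nat.mul_div_cancel_left k hd] at hgcd
  rw [redei_card d k hd hk, padicValNat.mul hd.ne' hk.ne']
  -- from a positive valuation, split off the factor two
  have split : 1 ≤ padicValNat 2 k → ∃ e k', d = 2 * e ∧ k = 2 * k' ∧ 0 < k' ∧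
      Nat.Coprime e k' ∧ padicValNat 2 k = padicValNat 2 k' + 1 ∧
      ∀ t, k ∣ d * t + 2 ↔ k' ∣ e * t + 1 := by
    intro hv
    have h2 : 2 ∣ k := dvd_of_one_le_padicValNat hv
    obtain ⟨k', rfl⟩ := h2
    obtain ⟨e, rfl⟩ := hdeven.two_dvd
    refine ⟨e, k', rfl, rfl, by omega, ?_, ?_, ?_⟩
    · rw [Nat.gcd_mul_left] at hgcd
      have := Nat.le_of_dvd (by norm_num) hgcd
      have h0 : 0 < Nat.gcd e k' := Nat.gcd_pos_of_pos_left _ (by omega)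
      rw [Nat.Coprime]; omega
    · rw [padicValNat.mul (by norm_num) (by omega), padicValNat.self (by norm_num)]; omega
    · intro t
      have : 2 * e * t + 2 = 2 * (e * t + 1) := by ring
      rw [this, Nat.mul_dvd_mul_iff_left (by norm_num)]
  have cop : ∀ e k' t : ℕ, k' ∣ e * t + 1 → Nat.Coprime t k' := by
    intro e k' t h
    have h1 := (Nat.gcd_dvd_right t k').trans h
    have h2 : Nat.gcd t k' ∣ e * t := (Nat.gcd_dvd_left t k').mul_left _
    exact Nat.dvd_one.1 ((Nat.dvd_add_right h2).1 h1)
  refine ⟨?_, ?_⟩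
  · rintro (h | ⟨h, -⟩)
    · have hv : padicValNat 2 k = 0 := by omega
      have hodd : ¬ 2 ∣ k := by
        intro h2
        have := one_le_padicValNat_of_dvd hk.ne' h2
        omega
      have hc2 : Nat.Coprime 2 k := (Nat.Prime.coprime_iff_not_dvd Nat.prime_two).2 hodd
      have hdk : Nat.Coprime d k :=
        Nat.dvd_one.1 (hc2 ▸ Nat.dvd_gcd hgcd (Nat.gcd_dvd_right d k))
      obtain ⟨c, -, hc⟩ := redei_lin d 2 k hk hdk
      apply redei_one k c hk
      intro t
      rw [← hc]
      refine ⟨fun h => h.2, fun h => ⟨?_, h⟩⟩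
      have h1 := (Nat.gcd_dvd_right t k).trans h
      have h2 : Nat.gcd t k ∣ d * t := (Nat.gcd_dvd_left t k).mul_left _
      have h3 := (Nat.dvd_add_right h2).1 h1
      exact Nat.dvd_one.1 (hc2 ▸ Nat.dvd_gcd h3 (Nat.gcd_dvd_right t k))
    · obtain ⟨e, k', -, hk2, hk', hco, hv, hiff⟩ := split (by omega)
      have hodd : ¬ 2 ∣ k' := by
        intro h2
        have := one_le_padicValNat_of_dvd hk'.ne' h2
        omega
      have hc2 : Nat.Coprime 2 k' := (Nat.Prime.coprime_iff_not_dvd Nat.prime_two).2 hodd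
      obtain ⟨c, -, hc⟩ := redei_lin e 1 k' hk' hco
      obtain ⟨c', h1, h2⟩ := Nat.chineseRemainder hc2 1 c
      apply redei_one k c' hk
      intro t
      rw [hiff, hk2, ← Nat.modEq_and_modEq_iff_modEq_mul hc2, Nat.coprime_mul_iff_right]
      have ht : Nat.Coprime t 2 ↔ t ≡ c' [MOD 2] := by
        rw [Nat.coprime_two_right, Nat.odd_iff]
        unfold Nat.ModEq at h1 ⊢
        omega
      have hk3 : k' ∣ e * t + 1 ↔ t ≡ c' [MOD k'] := by
        rw [hc]
        exact ⟨fun h => h.trans h2.symm, fun h => h.trans h2⟩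
      rw [← ht, ← hk3]
      exact ⟨fun h => ⟨h.1.1, h.2⟩, fun h => ⟨⟨h.1, cop _ _ _ h.2⟩, h.2⟩⟩
  · rintro ⟨h, h'⟩
    obtain ⟨e, k', -, hk2, hk', hco, hv, hiff⟩ := split (by omega)
    have heven : 2 ∣ k' := dvd_of_one_le_padicValNat (by omega)
    obtain ⟨c, hck, hc⟩ := redei_lin e 1 k' hk' hco
    have := redei_two k' c hck (fun t => Nat.Coprime t k ∧ k ∣ d * t + 2) (by
      intro t
      rw [hiff, ← hc, hk2, Nat.coprime_mul_iff_right]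
      exact ⟨fun h => h.2, fun h =>
        ⟨⟨(cop _ _ _ h).coprime_dvd_right heven, cop _ _ _ h⟩, h⟩⟩)
    rw [← hk2] at this
    exact this
end

section
/- Let q be a power of an odd prime with q > 3. Then: (a) the set of integers n with 1 ≤ n ≤ q − 1 such that (q − 1) divides n² − 1 and gcd(n − 1, q − 1) = 2 equals {(q − 3)/2, q − 2} if q ≡ 1 (mod 8), and equals {q − 2} if q ≡ 3, 5, or 7 (mod 8); (b) the set of integers n with 1 ≤ n ≤ q + 1 such that (q + 1) divides n² − 1 and gcd(n − 1, q + 1) = 4 equals {(q − 1)/2} if q ≡ 3 (mod 8), equals {(3q − 1)/4} if q ≡ 7 (mod 32), equals {(q − 3)/4} if q ≡ 23 (mod 32), and is empty in all remaining cases. -/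
lemma auxA (m n : ℕ) (hm : 2 ≤ m) (h1 : 1 ≤ n) (h2 : n ≤ 2 * m) :
    (2 * m ∣ n ^ 2 - 1 ∧ Nat.gcd (n - 1) (2 * m) = 2) ↔
      (n + 1 = 2 * m ∨ (n + 1 = m ∧ m % 4 = 0)) := by
  obtain ⟨x, rfl⟩ : ∃ x, n = x + 1 := ⟨n - 1, by omega⟩
  have e : (x + 1) ^ 2 - 1 = x * (x + 2) := by
    have : (x + 1) ^ 2 = x * (x + 2) + 1 := by ring
    omega
  rw [e, Nat.add_sub_cancel]
  constructor
  · rintro ⟨hd, hg⟩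
    obtain ⟨k, rfl⟩ : 2 ∣ x := hg ▸ Nat.gcd_dvd_left x (2 * m)
    rw [Nat.gcd_mul_left] at hg
    have hc : Nat.Coprime m k := by
      rw [Nat.coprime_comm]; unfold Nat.Coprime; omega
    have hd2 : m ∣ k * (2 * k + 2) := by
      rw [mul_assoc] at hd
      exact Nat.dvd_of_mul_dvd_mul_left (by norm_num) hd
    obtain ⟨t, ht⟩ := hc.dvd_of_dvd_mul_left hd2
    have ht3 : t < 3 := by
      by_contra h
      have : m * 3 ≤ m * t := Nat.mul_le_mul_left _ (by omega)
      omega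
    interval_cases t
    · omega
    · right
      refine ⟨by omega, ?_⟩
      by_contra h
      have hk : 2 ∣ k := by omega
      have hm2 : 2 ∣ m := by omega
      have := Nat.dvd_gcd hm2 hk
      rw [hc] at this
      omega
    · left; omega
  · rintro (h | ⟨h, h4⟩)
    · obtain ⟨k, rfl⟩ : ∃ k, m = k + 1 := ⟨m - 1, by omega⟩
      obtain rfl : x = 2 * k := by omega
      refine ⟨⟨2 * k, by ring⟩, ?_⟩
      rw [Nat.gcd_mul_left]
      simp
    · obtain ⟨c, rfl⟩ : ∃ c, m = 4 * (c + 1) := ⟨m / 4 - 1, by omega⟩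
      obtain rfl : x = 2 * (2 * c + 1) := by omega
      refine ⟨⟨2 * c + 1, by ring⟩, ?_⟩
      rw [Nat.gcd_mul_left]
      have : Nat.Coprime (2 * c + 1) (4 * (c + 1)) := by
        rw [← Nat.isCoprime_iff_coprime]
        exact ⟨-(2 * c + 3), c + 1, by push_cast; ring⟩
      rw [this]

lemma auxB (m n : ℕ) (hm : 2 ≤ m) (h1 : 1 ≤ n) (h2 : n ≤ 4 * m) :
    (4 * m ∣ n ^ 2 - 1 ∧ Nat.gcd (n - 1) (4 * m) = 4) ↔
      ((n + 1 = 2 * m ∧ m % 2 = 1) ∨ (n + 1 = m ∧ m % 8 = 6) ∨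
        (n + 1 = 3 * m ∧ m % 8 = 2)) := by
  obtain ⟨x, rfl⟩ : ∃ x, n = x + 1 := ⟨n - 1, by omega⟩
  have e : (x + 1) ^ 2 - 1 = x * (x + 2) := by
    have : (x + 1) ^ 2 = x * (x + 2) + 1 := by ring
    omega
  rw [e, Nat.add_sub_cancel]
  constructor
  · rintro ⟨hd, hg⟩
    obtain ⟨k, rfl⟩ : 4 ∣ x := hg ▸ Nat.gcd_dvd_left x (4 * m)
    rw [Nat.gcd_mul_left] at hg
    have hc : Nat.Coprime m k := by
      rw [Nat.coprime_comm]; unfold Nat.Coprime; omega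
    have hd2 : m ∣ k * (4 * k + 2) := by
      rw [mul_assoc] at hd
      exact Nat.dvd_of_mul_dvd_mul_left (by norm_num) hd
    obtain ⟨t, ht⟩ := hc.dvd_of_dvd_mul_left hd2
    have ht3 : t < 5 := by
      by_contra h
      have : m * 5 ≤ m * t := Nat.mul_le_mul_left _ (by omega)
      omega
    have hpar : ¬ (2 ∣ m ∧ 2 ∣ k) := by
      rintro ⟨ha, hb⟩
      have := Nat.dvd_gcd ha hb
      rw [hc] at this
      omega
    interval_cases t <;> omega
  · rintro (⟨h, h4⟩ | ⟨h, h4⟩ | ⟨h, h4⟩)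
    · obtain ⟨k, rfl⟩ : ∃ k, m = 2 * k + 1 := ⟨m / 2, by omega⟩
      obtain rfl : x = 4 * k := by omega
      refine ⟨⟨2 * k, by ring⟩, ?_⟩
      rw [Nat.gcd_mul_left]
      have : Nat.Coprime k (2 * k + 1) := by
        rw [← Nat.isCoprime_iff_coprime]
        exact ⟨-2, 1, by push_cast; ring⟩
      rw [this]
    · obtain ⟨j, rfl⟩ : ∃ j, m = 8 * j + 6 := ⟨m / 8, by omega⟩
      obtain rfl : x = 4 * (2 * j + 1) := by omega
      refine ⟨⟨2 * j + 1, by ring⟩, ?_⟩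
      rw [Nat.gcd_mul_left]
      have : Nat.Coprime (2 * j + 1) (8 * j + 6) := by
        rw [← Nat.isCoprime_iff_coprime]
        exact ⟨1 + 4 * j, -j, by push_cast; ring⟩
      rw [this]
    · obtain ⟨i, rfl⟩ : ∃ i, m = 8 * i + 2 := ⟨m / 8, by omega⟩
      obtain rfl : x = 4 * (6 * i + 1) - 0 := by omega
      refine ⟨⟨3 * (6 * i + 1), by simp only [Nat.sub_zero]; ring⟩, ?_⟩
      rw [Nat.sub_zero, Nat.gcd_mul_left]
      have : Nat.Coprime (6 * i + 1) (8 * i + 2) := by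
        rw [← Nat.isCoprime_iff_coprime]
        exact ⟨1 + 12 * i, -(9 * i), by push_cast; ring⟩
      rw [this]

lemma auxA' (q n : ℕ) (hq3 : 3 < q) (hodd : q % 2 = 1) :
    n ∈ (Finset.Icc 1 (q - 1)).filter
        (fun n => (q - 1) ∣ n ^ 2 - 1 ∧ Nat.gcd (n - 1) (q - 1) = 2) ↔
      (n + 2 = q ∨ (2 * n + 3 = q ∧ q % 8 = 1)) := by
  rw [Finset.mem_filter, Finset.mem_Icc]
  obtain ⟨m, rfl⟩ : ∃ m, q = 2 * m + 1 := ⟨q / 2, by omega⟩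
  rw [Nat.add_sub_cancel]
  constructor
  · rintro ⟨⟨h1, h2⟩, h⟩
    have := (auxA m n (by omega) h1 h2).1 h
    omega
  · intro h
    have h1 : 1 ≤ n := by omega
    have h2 : n ≤ 2 * m := by omega
    exact ⟨⟨h1, h2⟩, (auxA m n (by omega) h1 h2).2 (by omega)⟩

lemma auxB' (q n : ℕ) (hq3 : 3 < q) :
    n ∈ (Finset.Icc 1 (q + 1)).filter
        (fun n => (q + 1) ∣ n ^ 2 - 1 ∧ Nat.gcd (n - 1) (q + 1) = 4) ↔
      ((2 * n + 1 = q ∧ q % 8 = 3) ∨ (4 * n + 3 = q ∧ q % 32 = 23) ∨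
        (4 * n + 1 = 3 * q ∧ q % 32 = 7)) := by
  rw [Finset.mem_filter, Finset.mem_Icc]
  by_cases h4 : 4 ∣ q + 1
  · obtain ⟨m, hm⟩ := h4
    rw [hm]
    constructor
    · rintro ⟨⟨h1, h2⟩, h⟩
      have := (auxB m n (by omega) h1 h2).1 h
      omega
    · intro h
      have h1 : 1 ≤ n := by omega
      have h2 : n ≤ 4 * m := by omega
      exact ⟨⟨h1, h2⟩, (auxB m n (by omega) h1 h2).2 (by omega)⟩
  · constructor
    · rintro ⟨-, -, h⟩
      exact absurd (h ▸ Nat.gcd_dvd_right (n - 1) (q + 1)) h4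
    · intro h
      omega

/-- Proposition 3.10: the Rédei involutions with four fixed points. -/
theorem stmt_12 (q : ℕ) (hq : ∃ p' j : ℕ, p'.Prime ∧ Odd p' ∧ 0 < j ∧ q = p' ^ j)
    (hq3 : 3 < q) :
    ((q % 8 = 1 →
      (Finset.Icc 1 (q - 1)).filter
        (fun n => (q - 1) ∣ n ^ 2 - 1 ∧ Nat.gcd (n - 1) (q - 1) = 2) =
        {(q - 3) / 2, q - 2}) ∧
     ((q % 8 = 3 ∨ q % 8 = 5 ∨ q % 8 = 7) →
      (Finset.Icc 1 (q - 1)).filter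
        (fun n => (q - 1) ∣ n ^ 2 - 1 ∧ Nat.gcd (n - 1) (q - 1) = 2) =
        {q - 2})) ∧
    ((q % 8 = 3 →
      (Finset.Icc 1 (q + 1)).filter
        (fun n => (q + 1) ∣ n ^ 2 - 1 ∧ Nat.gcd (n - 1) (q + 1) = 4) =
        {(q - 1) / 2}) ∧
     (q % 32 = 7 →
      (Finset.Icc 1 (q + 1)).filter
        (fun n => (q + 1) ∣ n ^ 2 - 1 ∧ Nat.gcd (n - 1) (q + 1) = 4) =
        {(3 * q - 1) / 4}) ∧
     (q % 32 = 23 →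
      (Finset.Icc 1 (q + 1)).filter
        (fun n => (q + 1) ∣ n ^ 2 - 1 ∧ Nat.gcd (n - 1) (q + 1) = 4) =
        {(q - 3) / 4}) ∧
     (q % 8 ≠ 3 → q % 32 ≠ 7 → q % 32 ≠ 23 →
      (Finset.Icc 1 (q + 1)).filter
        (fun n => (q + 1) ∣ n ^ 2 - 1 ∧ Nat.gcd (n - 1) (q + 1) = 4) = ∅)) := by

  clear hq
  refine ⟨⟨fun h => ?_, fun h => ?_⟩, fun h => ?_, fun h => ?_, fun h => ?_, fun h h' h'' => ?_⟩
  · ext n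
    rw [auxA' q n hq3 (by omega), Finset.mem_insert, Finset.mem_singleton]
    omega
  · ext n
    rw [auxA' q n hq3 (by omega), Finset.mem_singleton]
    omega
  · ext n
    rw [auxB' q n hq3, Finset.mem_singleton]
    omega
  · ext n
    rw [auxB' q n hq3, Finset.mem_singleton]
    omega
  · ext n
    rw [auxB' q n hq3, Finset.mem_singleton]
    omega
  · ext n
    rw [auxB' q n hq3]
    simp only [Finset.notMem_empty, iff_false]
    omega
end
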